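/- Let {f_α}_{α∈A} : 𝒮_X → 𝒮_Y be a morphism between inverse spectra 𝒮_X = {X_α, p_α^β, A} and 𝒮_Y = {Y_α, π_α^β, A} with surjective limit projections. If for the cardinal κ = sup{πw(Y_α) : α ∈ A} the index set A is κ-directed, and all bonding ↓_α^β-squares (α ≤ β in A) of the morphism are skeletal, then all limit ↓α-squares (α ∈ A) of the morphism are skeletal. -/

import Mathlib

open Set Topology

universe u

/-- A continuous map `f : X → Y` is *skeletal* if for every non-empty open `U ⊆ X` the
closure of `f(U)` has non-empty interior. -/
def Skeletal {X Y : Type*} [TopologicalSpace X] [TopologicalSpace Y] (f : X → Y) : Prop :=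
  ∀ U : Set X, IsOpen U → U.Nonempty → (interior (closure (f '' U))).Nonempty

/-- A commutative square (top map `g' : X' → Y'`, bottom map `g : X → Y`, vertical maps
`qX : X' → X`, `qY : Y' → Y`) is *skeletal* if for each point `x ∈ X` and each neighborhood
`U` of `x` there is a non-empty open `V ⊆ Y` with `V ⊆ cl (g '' U)` and
`qY ⁻¹' V ⊆ cl (g' '' (qX ⁻¹' U))`. -/
def SkeletalSquare {X Y X' Y' : Type*} [TopologicalSpace X] [TopologicalSpace Y]
    [TopologicalSpace X'] [TopologicalSpace Y']
    (g' : X' → Y') (g : X → Y) (qX : X' → X) (qY : Y' → Y) : Prop :=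
  ∀ x : X, ∀ U ∈ 𝓝 x, ∃ V : Set Y, IsOpen V ∧ V.Nonempty ∧ V ⊆ closure (g '' U) ∧
    qY ⁻¹' V ⊆ closure (g' '' (qX ⁻¹' U))

/-- An *inverse spectrum* over a partially ordered index set `A`: topological spaces `X a`
together with continuous bonding maps `bond h : X b → X a` for `h : a ≤ b`, satisfying the
usual identity and composition laws. -/
structure InvSpec (A : Type u) [PartialOrder A] : Type (u + 1) where
  X : A → Type u
  [topX : ∀ a, TopologicalSpace (X a)]
  bond : ∀ {a b : A}, a ≤ b → X b → X a
  bond_cont : ∀ {a b : A} (h : a ≤ b), Continuous (bond h)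
  bond_refl : ∀ (a : A) (x : X a), bond le_rfl x = x
  bond_comp : ∀ {a b c : A} (hab : a ≤ b) (hbc : b ≤ c) (x : X c),
    bond hab (bond hbc x) = bond (hab.trans hbc) x

attribute [instance] InvSpec.topX

variable {A : Type u} [PartialOrder A]

/-- The limit `lim 𝒮` of an inverse spectrum, as the set of threads in the product. -/
def InvSpec.limitSet (S : InvSpec A) : Set (∀ a, S.X a) :=
  {x | ∀ (a b : A) (h : a ≤ b), S.bond h (x b) = x a}

/-- The limit projection `p_a : lim 𝒮 → X a`. -/
def InvSpec.proj (S : InvSpec A) (a : A) : S.limitSet → S.X a := fun x => x.1 a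

/-- A *morphism* between two inverse spectra over the same index set: a family of continuous
maps `f a : X a → Y a` commuting with the bonding maps. -/
structure SpecMor (S T : InvSpec A) where
  maps : ∀ a, S.X a → T.X a
  maps_cont : ∀ a, Continuous (maps a)
  comm : ∀ {a b : A} (h : a ≤ b) (x : S.X b), maps a (S.bond h x) = T.bond h (maps b x)

/-- The limit map `lim f_a : lim 𝒮_X → lim 𝒮_Y` of a morphism of spectra. -/
def SpecMor.limMap {S T : InvSpec A} (F : SpecMor S T) : S.limitSet → T.limitSet :=
  fun x => ⟨fun a => F.maps a (x.1 a),
    fun a b h => by rw [← F.comm h (x.1 b), x.2 a b h]⟩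

/-- The *limit `↓a`-square* of a morphism (top map `lim f`, bottom map `f a`, verticals the
limit projections) is skeletal. -/
def LimitSquareSkeletal {S T : InvSpec A} (F : SpecMor S T) (a : A) : Prop :=
  SkeletalSquare F.limMap (F.maps a) (S.proj a) (T.proj a)

/-- The *bonding `↓_a^b`-square* of a morphism (top map `f b`, bottom map `f a`, verticals
the bonding maps) is skeletal. -/
def BondingSquareSkeletal {S T : InvSpec A} (F : SpecMor S T) {a b : A} (h : a ≤ b) : Prop :=
  SkeletalSquare (F.maps b) (F.maps a) (S.bond h) (T.bond h)

/-- A family of non-empty open sets is a *π-base* if every non-empty open set contains a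
member of the family. -/
def IsPiBase {Z : Type*} [TopologicalSpace Z] (B : Set (Set Z)) : Prop :=
  (∀ U ∈ B, IsOpen U ∧ U.Nonempty) ∧
  ∀ U : Set Z, IsOpen U → U.Nonempty → ∃ V ∈ B, V ⊆ U

/-- The *π-weight* of a space: the smallest cardinality of a π-base. -/
noncomputable def piWeight (Z : Type u) [TopologicalSpace Z] : Cardinal.{u} :=
  ⨅ B : {B : Set (Set Z) // IsPiBase B}, Cardinal.mk B.1

/-- A partially ordered set is *κ-directed* if every subset of cardinality `≤ κ` has an
upper bound. -/
def CardDirected (A : Type u) [PartialOrder A] (κ : Cardinal.{u}) : Prop :=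
  ∀ K : Set A, Cardinal.mk K ≤ κ → ∃ ub : A, ∀ k ∈ K, k ≤ ub

/-- A partially ordered set is *ω-complete* if every (non-empty) countable chain has a least
upper bound. -/
def OmegaComplete (A : Type u) [PartialOrder A] : Prop :=
  ∀ C : Set A, C.Countable → C.Nonempty → IsChain (· ≤ ·) C → ∃ b : A, IsLUB C b

/-- The limit of the restriction of a spectrum to a subset `C` of the index set. -/
def InvSpec.limitSetOn (S : InvSpec A) (C : Set A) : Set (∀ c : C, S.X c) :=
  {x | ∀ (c d : C) (h : (c : A) ≤ (d : A)), S.bond h (x d) = x c}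

/-- The canonical map `X g → lim {X a, a ∈ C}` when `g` is a least upper bound of `C`. -/
def InvSpec.toLimitOn (S : InvSpec A) {C : Set A} {g : A} (hg : IsLUB C g) :
    S.X g → S.limitSetOn C :=
  fun xg => ⟨fun c => S.bond (hg.1 c.2) xg, fun c d h => S.bond_comp h (hg.1 d.2) xg⟩

/-- A spectrum is *continuous* (τ-continuous) if for every non-empty directed subset `C` of
the index set having a least upper bound `g`, the canonical map `X g → lim {X a, a ∈ C}` is
a homeomorphism. -/
def InvSpec.IsContinuousSpectrum (S : InvSpec A) : Prop :=
  ∀ (C : Set A) (g : A), C.Nonempty → DirectedOn (· ≤ ·) C → ∀ hg : IsLUB C g,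
    IsHomeomorph (S.toLimitOn hg)

/-- A *πτ-spectrum*: all spaces have π-weight `≤ τ`, the index set is τ-directed and
ω-complete, and the spectrum is τ-continuous. -/
def IsPiTauSpectrum (τ : Cardinal.{u}) (S : InvSpec A) : Prop :=
  (∀ a : A, piWeight (S.X a) ≤ τ) ∧ CardDirected A τ ∧ OmegaComplete A ∧
    S.IsContinuousSpectrum

/-- A subset `C` of a directed poset is *cofinal* if every element of the poset is below
some element of `C`. -/
def IsCofinalSub {A : Type u} [PartialOrder A] (C : Set A) : Prop :=
  ∀ a : A, ∃ b ∈ C, a ≤ b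

/-- A subset `C` is *τ-closed* (equivalently ω-closed) if for each (non-empty) directed
subset `D ⊆ C` having a least upper bound in `A`, this least upper bound belongs to `C`. -/
def IsSupClosed {A : Type u} [PartialOrder A] (C : Set A) : Prop :=
  ∀ D ⊆ C, D.Nonempty → DirectedOn (· ≤ ·) D → ∀ g : A, IsLUB D g → g ∈ C

/-!
A point of the limit lies in the closure of a set `Z` as soon as each of its coordinates lies in
the closure of the corresponding projection of `Z`, and passing to a larger index only makes this
coordinate test stronger. Hence, over a `κ`-directed index set, one index `c` decides `κ` many
inclusions `E ⊆ cl Z` at once. Take for the sets `E` the preimages of the members of a π-base of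
`Y a`, and for `Z` the set `lim f (p_a⁻¹ U)`: skeletality of the single bonding `↓_a^c`-square then
yields a member of the π-base that witnesses skeletality of the limit `↓a`-square.
-/

theorem exists_isPiBase_mk_eq_piWeight (Z : Type u) [TopologicalSpace Z] :
    ∃ B : Set (Set Z), IsPiBase B ∧ Cardinal.mk B = piWeight Z := by
  have : Nonempty {B : Set (Set Z) // IsPiBase B} :=
    ⟨{U | IsOpen U ∧ U.Nonempty}, fun _ hU => hU, fun U hU hne => ⟨U, ⟨hU, hne⟩, Subset.rfl⟩⟩
  obtain ⟨⟨B, hB⟩, hcard⟩ := ciInf_mem fun B : {B : Set (Set Z) // IsPiBase B} => Cardinal.mk B.1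
  exact ⟨B, hB, hcard⟩

namespace CardDirected

theorem mono {κ μ : Cardinal.{u}} (h : CardDirected A κ) (hμ : μ ≤ κ) : CardDirected A μ :=
  fun K hK => h K (hK.trans hμ)

theorem exists_forall_le {ι : Type u} (h : CardDirected A (Cardinal.mk ι)) (b : ι → A) :
    ∃ c, ∀ i, b i ≤ c := by
  simpa only [forall_mem_range] using h (range b) Cardinal.mk_range_le

end CardDirected

namespace InvSpec

variable (S : InvSpec A)

theorem bond_comp_proj {a b : A} (h : a ≤ b) : S.bond h ∘ S.proj b = S.proj a :=
  funext fun x => x.2 a b h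

theorem nhds_eq_iInf_comap_proj (x : S.limitSet) :
    𝓝 x = ⨅ a, Filter.comap (S.proj a) (𝓝 (S.proj a x)) := by
  rw [nhds_subtype, nhds_pi, Filter.pi, Filter.comap_iInf]
  simp only [Filter.comap_comap]
  rfl

theorem antitone_comap_proj_nhds (x : S.limitSet) :
    Antitone fun a => Filter.comap (S.proj a) (𝓝 (S.proj a x)) := by
  intro a b h
  simp only [← S.bond_comp_proj h, ← Filter.comap_comap]
  exact Filter.comap_mono (S.bond_cont h).continuousAt.tendsto.le_comap

variable {S}

theorem mem_closure_of_forall_proj_mem_closure [Nonempty A] [IsDirectedOrder A]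
    {x : S.limitSet} {Z : Set S.limitSet}
    (h : ∀ a, S.proj a x ∈ closure (S.proj a '' Z)) : x ∈ closure Z := by
  refine mem_closure_iff_nhds.2 fun O hO => ?_
  rw [S.nhds_eq_iInf_comap_proj,
    Filter.mem_iInf_of_directed (S.antitone_comap_proj_nhds x).directed_ge] at hO
  obtain ⟨a, W, hW, hWO⟩ := hO
  obtain ⟨_, hzW, z, hzZ, rfl⟩ := mem_closure_iff_nhds.1 (h a) W hW
  exact ⟨z, hWO hzW, hzZ⟩

theorem proj_mem_closure_of_le {a b : A} (h : a ≤ b) {x : S.limitSet} {Z : Set S.limitSet}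
    (hx : S.proj b x ∈ closure (S.proj b '' Z)) : S.proj a x ∈ closure (S.proj a '' Z) := by
  simp only [← S.bond_comp_proj h, image_comp]
  exact mem_closure_image (S.bond_cont h).continuousAt hx

theorem exists_ge_forall_subset_closure [IsDirectedOrder A] (a : A) {ι : Type u}
    (hι : CardDirected A (Cardinal.mk ι)) (E : ι → Set S.limitSet) (Z : Set S.limitSet) :
    ∃ c, a ≤ c ∧ ∀ i, MapsTo (S.proj c) (E i) (closure (S.proj c '' Z)) → E i ⊆ closure Z := by
  have : Nonempty A := ⟨a⟩
  have exists_index : ∀ i, ∃ b,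
      MapsTo (S.proj b) (E i) (closure (S.proj b '' Z)) → E i ⊆ closure Z := by
    intro i
    by_contra! hi
    obtain ⟨x, hxE, hxZ⟩ := not_subset.1 (hi a).2
    exact hxZ (mem_closure_of_forall_proj_mem_closure fun b => (hi b).1 hxE)
  choose b hb using exists_index
  obtain ⟨d, hbd⟩ := hι.exists_forall_le b
  obtain ⟨c, hac, hdc⟩ := exists_ge_ge a d
  exact ⟨c, hac, fun i hc => hb i fun x hx => proj_mem_closure_of_le ((hbd i).trans hdc) (hc hx)⟩

end InvSpec

theorem SpecMor.closure_image_preimage_bond_subset {S T : InvSpec A} (F : SpecMor S T) {a c : A}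
    (h : a ≤ c) (hc : DenseRange (S.proj c)) {U : Set (S.X a)} (hU : IsOpen U) :
    closure (F.maps c '' (S.bond h ⁻¹' U)) ⊆
      closure (T.proj c '' (F.limMap '' (S.proj a ⁻¹' U))) := by
  have hdense : S.bond h ⁻¹' U ⊆ closure (S.proj c '' (S.proj a ⁻¹' U)) := by
    simpa only [← preimage_comp, S.bond_comp_proj h] using
      hc.subset_closure_image_preimage_of_isOpen (hU.preimage (S.bond_cont h))
  have hcomm : T.proj c ∘ F.limMap = F.maps c ∘ S.proj c := rfl
  rw [← image_comp, hcomm, image_comp,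
    ← closure_image_closure (s := S.proj c '' _) (F.maps_cont c)]
  exact closure_mono (image_mono hdense)

theorem limitSquaresSkeletal_of_bondingSquares_general [IsDirectedOrder A]
    {S T : InvSpec A} (F : SpecMor S T) {a : A}
    (hS : ∀ b, a ≤ b → DenseRange (S.proj b))
    (hκ : CardDirected A (piWeight (T.X a)))
    (hsq : ∀ {b : A} (h : a ≤ b), BondingSquareSkeletal F h) :
    LimitSquareSkeletal F a := by
  intro x N hN
  obtain ⟨U, hUN, hU, hxU⟩ := mem_nhds_iff.1 hN
  obtain ⟨B, hB, hcard⟩ := exists_isPiBase_mk_eq_piWeight (T.X a)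
  obtain ⟨c, hac, hc⟩ := InvSpec.exists_ge_forall_subset_closure a (hcard ▸ hκ)
    (fun V : B => T.proj a ⁻¹' V) (F.limMap '' (S.proj a ⁻¹' U))
  obtain ⟨G, hG, hGne, hGU, hGpre⟩ := hsq hac x U (hU.mem_nhds hxU)
  obtain ⟨V, hVB, hVG⟩ := hB.2 G hG hGne
  have hVc : MapsTo (T.proj c) (T.proj a ⁻¹' V)
      (closure (T.proj c '' (F.limMap '' (S.proj a ⁻¹' U)))) := by
    intro y hy
    rw [← T.bond_comp_proj hac] at hy
    exact F.closure_image_preimage_bond_subset hac (hS c hac) hU (hGpre (hVG hy))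
  exact ⟨V, (hB.1 V hVB).1, (hB.1 V hVB).2,
    (hVG.trans hGU).trans (closure_mono (image_mono hUN)),
    (hc ⟨V, hVB⟩ hVc).trans (closure_mono (image_mono (preimage_mono hUN)))⟩

/-- Let `F` be a morphism between inverse spectra with surjective limit projections.  If the
index set is κ-directed for `κ = sup {πw(Y a) : a ∈ A}` and all bonding `↓_a^b`-squares of
`F` are skeletal, then all limit `↓a`-squares of `F` are skeletal. -/
theorem limitSquaresSkeletal_of_bondingSquares {A : Type u} [PartialOrder A] [Nonempty A]
    (hdir : ∀ a b : A, ∃ c : A, a ≤ c ∧ b ≤ c)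
    (S T : InvSpec A) (F : SpecMor S T)
    (hS : ∀ a : A, Function.Surjective (S.proj a))
    (hT : ∀ a : A, Function.Surjective (T.proj a))
    (hκ : CardDirected A (⨆ a : A, piWeight (T.X a)))
    (hsq : ∀ {a b : A} (h : a ≤ b), BondingSquareSkeletal F h) :
    ∀ a : A, LimitSquareSkeletal F a := by
  have : IsDirectedOrder A := ⟨hdir⟩
  exact fun a => limitSquaresSkeletal_of_bondingSquares_general F (fun b _ => (hS b).denseRange)
    (hκ.mono (le_ciSup Cardinal.bddAbove_of_small a)) hsq
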